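/- For every dimension n ≥ 1, every exponent p ∈ (1,∞) and every δ ≥ 0 there exists a positive constant a₂ = a₂(p,n,δ) such that for all vectors ξ, η ∈ ℝⁿ one has |ξ − η|^{2+δ} · ( |ξ| + |η| )^{p−2−δ} ≤ a₂ · ⟨ |ξ|^{p−2} ξ − |η|^{p−2} η , ξ − η ⟩, where ⟨·,·⟩ is the Euclidean inner product. -/

import Mathlib

open scoped RealInnerProductSpace

/-!
Write `a = ‖ξ‖` and `b = ‖η‖`. Since `‖ξ - η‖ ≤ a + b`, the case `δ = 0` implies all others.
For `δ = 0` the inner product is expanded in two ways. Symmetrically, it is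
`(a^(p-2) + b^(p-2)) / 2 * ‖ξ - η‖²` plus a term that is nonnegative for `2 ≤ p`, and the larger of
`a` and `b` is at least `(a + b) / 2`. For `p ≤ 2` it splits instead into a radial part
`(a^(p-1) - b^(p-1)) * (a - b)`, bounded below by concavity of `t ↦ t^(p-1)`, and an angular part
`(a^(p-2) + b^(p-2)) * (a * b - ⟪ξ, η⟫)`; correspondingly
`‖ξ - η‖² = (a - b)² + 2 * (a * b - ⟪ξ, η⟫)`.
-/

section RealPowers

variable {a b q r : ℝ}

lemma rpow_add_mul_rpow_sub_le_rpow_mul_rpow {x y k δ : ℝ} (hx : 0 ≤ x) (hxy : x ≤ y)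
    (hk : 0 ≤ k) (hδ : 0 ≤ δ) (r : ℝ) :
    x ^ (k + δ) * y ^ (r - δ) ≤ x ^ k * y ^ r := by
  rcases hδ.eq_or_lt with rfl | hδ_pos
  · simp only [add_zero, sub_zero, le_refl]
  rcases (hx.trans hxy).eq_or_lt with rfl | hy
  · obtain rfl : x = 0 := le_antisymm hxy hx
    rw [Real.zero_rpow (by positivity), zero_mul]
    positivity
  calc x ^ (k + δ) * y ^ (r - δ) = x ^ k * x ^ δ * y ^ (r - δ) := by
        rw [Real.rpow_add_of_nonneg hx hk hδ]
    _ ≤ x ^ k * y ^ δ * y ^ (r - δ) := by gcongr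
    _ = x ^ k * y ^ r := by rw [mul_assoc, ← Real.rpow_add hy, add_sub_cancel]

lemma add_div_two_rpow_le_add_rpow (ha : 0 ≤ a) (hb : 0 ≤ b) (hr : 0 ≤ r) :
    ((a + b) / 2) ^ r ≤ a ^ r + b ^ r := by
  wlog hba : b ≤ a generalizing a b
  · rw [add_comm a b, add_comm (a ^ r)]
    exact this hb ha (le_of_not_ge hba)
  calc ((a + b) / 2) ^ r ≤ a ^ r := by gcongr; linarith
    _ ≤ a ^ r + b ^ r := le_add_of_nonneg_right (by positivity)

lemma two_mul_add_rpow_le_add_rpow (ha : 0 < a) (hb : 0 < b) (hr : r ≤ 0) :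
    2 * (a + b) ^ r ≤ a ^ r + b ^ r := by
  have h_left : (a + b) ^ r ≤ a ^ r := Real.rpow_le_rpow_of_nonpos ha (by linarith) hr
  have h_right : (a + b) ^ r ≤ b ^ r := Real.rpow_le_rpow_of_nonpos hb (by linarith) hr
  linarith

lemma rpow_sub_mul_sq_sub_nonneg (ha : 0 ≤ a) (hb : 0 ≤ b) (hr : 0 ≤ r) :
    0 ≤ (a ^ r - b ^ r) * (a ^ 2 - b ^ 2) := by
  rcases le_total b a with hba | hab
  · exact mul_nonneg (sub_nonneg.2 (by gcongr)) (sub_nonneg.2 (by gcongr))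
  · exact mul_nonneg_of_nonpos_of_nonpos (sub_nonpos.2 (by gcongr)) (sub_nonpos.2 (by gcongr))

lemma rpow_le_rpow_add_mul_sub (ha : 0 < a) (hb : 0 ≤ b) (hq₀ : 0 ≤ q) (hq₁ : q ≤ 1) :
    b ^ q ≤ a ^ q + q * a ^ (q - 1) * (b - a) := by
  have bernoulli : (1 + (b / a - 1)) ^ q ≤ 1 + q * (b / a - 1) :=
    rpow_one_add_le_one_add_mul_self (by linarith [div_nonneg hb ha.le]) hq₀ hq₁
  rw [add_sub_cancel, Real.div_rpow hb ha.le, div_le_iff₀ (by positivity)] at bernoulli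
  refine bernoulli.trans_eq ?_
  rw [Real.rpow_sub_one ha.ne']
  field_simp

lemma mul_add_rpow_mul_sq_sub_le (ha : 0 ≤ a) (hb : 0 ≤ b) (hq₀ : 0 ≤ q) (hq₁ : q ≤ 1) :
    q * (a + b) ^ (q - 1) * (a - b) ^ 2 ≤ (a ^ q - b ^ q) * (a - b) := by
  wlog hba : b ≤ a generalizing a b
  · rw [add_comm a b, sub_sq_comm, ← neg_mul_neg (a ^ q - b ^ q), neg_sub, neg_sub]
    exact this hb ha (le_of_not_ge hba)
  rcases ha.eq_or_lt with rfl | ha_pos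
  · simp [le_antisymm hba hb]
  have h_base : (a + b) ^ (q - 1) ≤ a ^ (q - 1) :=
    Real.rpow_le_rpow_of_nonpos ha_pos (by linarith) (by linarith)
  calc q * (a + b) ^ (q - 1) * (a - b) ^ 2 ≤ q * a ^ (q - 1) * (a - b) ^ 2 := by gcongr
    _ = q * a ^ (q - 1) * (a - b) * (a - b) := by ring
    _ ≤ (a ^ q - b ^ q) * (a - b) := by
        refine mul_le_mul_of_nonneg_right ?_ (sub_nonneg.2 hba)
        linarith [rpow_le_rpow_add_mul_sub ha_pos hb hq₀ hq₁]

end RealPowers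

section InnerProductSpace

variable {E : Type*} [NormedAddCommGroup E] [InnerProductSpace ℝ E] {p r : ℝ}

lemma inner_smul_sub_smul_sub_eq_half_add (α β : ℝ) (ξ η : E) :
    ⟪α • ξ - β • η, ξ - η⟫ =
      (α + β) / 2 * ‖ξ - η‖ ^ 2 + (α - β) * (‖ξ‖ ^ 2 - ‖η‖ ^ 2) / 2 := by
  rw [norm_sub_sq_real]
  simp only [inner_sub_left, inner_sub_right, real_inner_smul_left, real_inner_self_eq_norm_sq,
    real_inner_comm ξ η]
  ring

lemma norm_sub_sq_eq_radial_add_angular (ξ η : E) :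
    ‖ξ - η‖ ^ 2 = (‖ξ‖ - ‖η‖) ^ 2 + 2 * (‖ξ‖ * ‖η‖ - ⟪ξ, η⟫) := by
  rw [norm_sub_sq_real]
  ring

lemma inner_smul_sub_smul_sub_eq_radial_add_angular (α β : ℝ) (ξ η : E) :
    ⟪α • ξ - β • η, ξ - η⟫ =
      (α * ‖ξ‖ - β * ‖η‖) * (‖ξ‖ - ‖η‖) + (α + β) * (‖ξ‖ * ‖η‖ - ⟪ξ, η⟫) := by
  rw [inner_smul_sub_smul_sub_eq_half_add, norm_sub_sq_eq_radial_add_angular]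
  ring

/-- The map `j_p(ξ) = |ξ|^(p-2) ξ`, the gradient of `|ξ|^p / p` for `1 < p`. Scalar multiplication
makes `j_p(0) = 0` automatic, whatever the value of `0 ^ (p - 2)`. -/
noncomputable def powerDualityMap (p : ℝ) (ξ : E) : E := ‖ξ‖ ^ (p - 2) • ξ

lemma two_rpow_mul_le_inner_powerDualityMap_sub (hp : 2 ≤ p) (ξ η : E) :
    2 ^ (1 - p) * (‖ξ - η‖ ^ 2 * (‖ξ‖ + ‖η‖) ^ (p - 2)) ≤
      ⟪powerDualityMap p ξ - powerDualityMap p η, ξ - η⟫ := by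
  have hr : 0 ≤ p - 2 := sub_nonneg.2 hp
  have h_average : ((‖ξ‖ + ‖η‖) / 2) ^ (p - 2) ≤ ‖ξ‖ ^ (p - 2) + ‖η‖ ^ (p - 2) :=
    add_div_two_rpow_le_add_rpow (norm_nonneg ξ) (norm_nonneg η) hr
  have h_monotone : 0 ≤ (‖ξ‖ ^ (p - 2) - ‖η‖ ^ (p - 2)) * (‖ξ‖ ^ 2 - ‖η‖ ^ 2) :=
    rpow_sub_mul_sq_sub_nonneg (norm_nonneg ξ) (norm_nonneg η) hr
  have h_const : (2 : ℝ) ^ (1 - p) = (2 ^ (p - 2))⁻¹ / 2 := by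
    rw [← Real.rpow_neg zero_le_two, ← Real.rpow_sub_one two_ne_zero]
    congr 1
    ring
  calc 2 ^ (1 - p) * (‖ξ - η‖ ^ 2 * (‖ξ‖ + ‖η‖) ^ (p - 2))
      = ((‖ξ‖ + ‖η‖) / 2) ^ (p - 2) / 2 * ‖ξ - η‖ ^ 2 := by
        rw [h_const, Real.div_rpow (by positivity) zero_le_two]
        ring
    _ ≤ (‖ξ‖ ^ (p - 2) + ‖η‖ ^ (p - 2)) / 2 * ‖ξ - η‖ ^ 2 := by gcongr
    _ ≤ (‖ξ‖ ^ (p - 2) + ‖η‖ ^ (p - 2)) / 2 * ‖ξ - η‖ ^ 2 +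
          (‖ξ‖ ^ (p - 2) - ‖η‖ ^ (p - 2)) * (‖ξ‖ ^ 2 - ‖η‖ ^ 2) / 2 := by linarith
    _ = ⟪powerDualityMap p ξ - powerDualityMap p η, ξ - η⟫ :=
        (inner_smul_sub_smul_sub_eq_half_add _ _ ξ η).symm

lemma two_mul_rpow_mul_angular_le (hr : r ≤ 0) (ξ η : E) :
    2 * (‖ξ‖ + ‖η‖) ^ r * (‖ξ‖ * ‖η‖ - ⟪ξ, η⟫) ≤
      (‖ξ‖ ^ r + ‖η‖ ^ r) * (‖ξ‖ * ‖η‖ - ⟪ξ, η⟫) := by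
  rcases eq_or_ne ξ 0 with rfl | hξ
  · simp only [norm_zero, zero_mul, inner_zero_left, sub_zero, mul_zero, le_refl]
  rcases eq_or_ne η 0 with rfl | hη
  · simp only [norm_zero, inner_zero_right, sub_zero, mul_zero, le_refl]
  exact mul_le_mul_of_nonneg_right
    (two_mul_add_rpow_le_add_rpow (norm_pos_iff.2 hξ) (norm_pos_iff.2 hη) hr)
    (sub_nonneg.2 (real_inner_le_norm ξ η))

lemma sub_one_mul_le_inner_powerDualityMap_sub (hp₁ : 1 < p) (hp₂ : p ≤ 2) (ξ η : E) :
    (p - 1) * (‖ξ - η‖ ^ 2 * (‖ξ‖ + ‖η‖) ^ (p - 2)) ≤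
      ⟪powerDualityMap p ξ - powerDualityMap p η, ξ - η⟫ := by
  have h_exponent : p - 1 - 1 = p - 2 := by ring
  have h_radial : (p - 1) * (‖ξ‖ + ‖η‖) ^ (p - 2) * (‖ξ‖ - ‖η‖) ^ 2 ≤
      (‖ξ‖ ^ (p - 1) - ‖η‖ ^ (p - 1)) * (‖ξ‖ - ‖η‖) := by
    have := mul_add_rpow_mul_sq_sub_le (norm_nonneg ξ) (norm_nonneg η)
      (q := p - 1) (by linarith) (by linarith)
    rwa [h_exponent] at this
  have h_angular : (p - 1) * (2 * (‖ξ‖ + ‖η‖) ^ (p - 2) * (‖ξ‖ * ‖η‖ - ⟪ξ, η⟫)) ≤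
      (‖ξ‖ ^ (p - 2) + ‖η‖ ^ (p - 2)) * (‖ξ‖ * ‖η‖ - ⟪ξ, η⟫) := by
    have h_cauchy_schwarz : 0 ≤ ‖ξ‖ * ‖η‖ - ⟪ξ, η⟫ := sub_nonneg.2 (real_inner_le_norm ξ η)
    exact (mul_le_of_le_one_left (by positivity) (by linarith)).trans
      (two_mul_rpow_mul_angular_le (by linarith) ξ η)
  have h_rpow (ζ : E) : ‖ζ‖ ^ (p - 1) = ‖ζ‖ ^ (p - 2) * ‖ζ‖ := by
    rw [← Real.rpow_add_one' (norm_nonneg ζ) (by linarith)]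
    congr 1
    ring
  calc (p - 1) * (‖ξ - η‖ ^ 2 * (‖ξ‖ + ‖η‖) ^ (p - 2))
      = (p - 1) * (‖ξ‖ + ‖η‖) ^ (p - 2) * (‖ξ‖ - ‖η‖) ^ 2 +
          (p - 1) * (2 * (‖ξ‖ + ‖η‖) ^ (p - 2) * (‖ξ‖ * ‖η‖ - ⟪ξ, η⟫)) := by
        rw [norm_sub_sq_eq_radial_add_angular]
        ring
    _ ≤ (‖ξ‖ ^ (p - 1) - ‖η‖ ^ (p - 1)) * (‖ξ‖ - ‖η‖) +
          (‖ξ‖ ^ (p - 2) + ‖η‖ ^ (p - 2)) * (‖ξ‖ * ‖η‖ - ⟪ξ, η⟫) := add_le_add h_radial h_angular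
    _ = ⟪powerDualityMap p ξ - powerDualityMap p η, ξ - η⟫ := by
        rw [h_rpow, h_rpow]
        exact (inner_smul_sub_smul_sub_eq_radial_add_angular _ _ ξ η).symm

lemma min_mul_le_inner_powerDualityMap_sub (hp : 1 < p) (ξ η : E) :
    min (p - 1) (2 ^ (1 - p)) * (‖ξ - η‖ ^ 2 * (‖ξ‖ + ‖η‖) ^ (p - 2)) ≤
      ⟪powerDualityMap p ξ - powerDualityMap p η, ξ - η⟫ := by
  rcases le_total p 2 with hp₂ | hp₂
  · exact (mul_le_mul_of_nonneg_right (min_le_left _ _) (by positivity)).trans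
      (sub_one_mul_le_inner_powerDualityMap_sub hp hp₂ ξ η)
  · exact (mul_le_mul_of_nonneg_right (min_le_right _ _) (by positivity)).trans
      (two_rpow_mul_le_inner_powerDualityMap_sub hp₂ ξ η)

theorem vector_inequality_two_general {δ : ℝ} (hp : 1 < p) (hδ : 0 ≤ δ) (ξ η : E) :
    ‖ξ - η‖ ^ (2 + δ) * (‖ξ‖ + ‖η‖) ^ (p - 2 - δ) ≤
      (min (p - 1) (2 ^ (1 - p)))⁻¹ *
        ⟪powerDualityMap p ξ - powerDualityMap p η, ξ - η⟫ := by
  have h_const : 0 < min (p - 1) (2 ^ (1 - p)) := lt_min (sub_pos.2 hp) (by positivity)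
  calc ‖ξ - η‖ ^ (2 + δ) * (‖ξ‖ + ‖η‖) ^ (p - 2 - δ)
      ≤ ‖ξ - η‖ ^ (2 : ℝ) * (‖ξ‖ + ‖η‖) ^ (p - 2) :=
        rpow_add_mul_rpow_sub_le_rpow_mul_rpow (norm_nonneg _) (norm_sub_le ξ η) zero_le_two hδ _
    _ = ‖ξ - η‖ ^ 2 * (‖ξ‖ + ‖η‖) ^ (p - 2) := by rw [Real.rpow_two]
    _ ≤ (min (p - 1) (2 ^ (1 - p)))⁻¹ *
          ⟪powerDualityMap p ξ - powerDualityMap p η, ξ - η⟫ :=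
        (le_inv_mul_iff₀ h_const).2 (min_mul_le_inner_powerDualityMap_sub hp ξ η)

end InnerProductSpace

/-- For every dimension `n ≥ 1`, exponent `p ∈ (1,∞)` and `δ ≥ 0` there is a positive
constant `a₂` such that
`|ξ − η|^{2+δ} (|ξ|+|η|)^{p−2−δ} ≤ a₂ ⟨|ξ|^{p-2} ξ − |η|^{p-2} η, ξ − η⟩`
for all `ξ, η ∈ ℝⁿ`. -/
theorem vector_inequality_two
    (n : ℕ) (hn : 1 ≤ n) (p δ : ℝ) (hp : 1 < p) (hδ : 0 ≤ δ) :
    ∃ a₂ : ℝ, 0 < a₂ ∧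
      ∀ ξ η : EuclideanSpace ℝ (Fin n),
        ‖ξ - η‖ ^ (2 + δ) * (‖ξ‖ + ‖η‖) ^ (p - 2 - δ) ≤
          a₂ * ⟪(‖ξ‖ ^ (p - 2)) • ξ - (‖η‖ ^ (p - 2)) • η, ξ - η⟫ := by
  exact ⟨(min (p - 1) (2 ^ (1 - p)))⁻¹, inv_pos.2 (lt_min (sub_pos.2 hp) (by positivity)),
    fun ξ η => vector_inequality_two_general hp hδ ξ η⟩
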